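/- arXiv:1802.07837 — 4 statements merged into one kernel-verified Lean document; each statement's English description precedes it below -/
import Mathlib

section
/- Let n ≥ 5 and let G be a subgroup of the symmetric group Sₙ of index n. Then up to conjugacy either G is the stabilizer of a point (isomorphic to Sₙ₋₁), or n = 6 and G acts on {1,...,6} as PGL₂(5) acts on the projective line over GF(5). -/
open Equiv Projectivization

instance : Fact (Nat.Prime 5) := ⟨by norm_num⟩

abbrev ProjLine5 := Projectivization (ZMod 5) (Fin 2 → ZMod 5)

/-- The linear automorphism of `GF(5)²` given by a matrix in `GL₂(GF(5))`. -/
noncomputable def glLin : GL (Fin 2) (ZMod 5) →* ((Fin 2 → ZMod 5) ≃ₗ[ZMod 5] (Fin 2 → ZMod 5)) :=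
  (LinearMap.GeneralLinearGroup.generalLinearEquiv (ZMod 5) (Fin 2 → ZMod 5)).toMonoidHom.comp
    (Matrix.GeneralLinearGroup.toLin).toMonoidHom

lemma glLin_comp (g h : GL (Fin 2) (ZMod 5)) :
    (glLin g).toLinearMap.comp (glLin h).toLinearMap = (glLin (g * h)).toLinearMap := by
  ext v
  simp [map_mul]

lemma glLin_one : (glLin (1 : GL (Fin 2) (ZMod 5))).toLinearMap = LinearMap.id := by
  ext v
  simp [map_one]

lemma pmap_congr {A B : (Fin 2 → ZMod 5) →ₗ[ZMod 5] (Fin 2 → ZMod 5)}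
    (hA : Function.Injective A) (hB : Function.Injective B) (hAB : A = B) :
    Projectivization.map A hA = Projectivization.map B hB := by
  subst hAB; rfl

/-- The permutation of the projective line `ℙ¹(GF(5))` induced by an element of
`GL₂(GF(5))`. -/
noncomputable def glPerm (g : GL (Fin 2) (ZMod 5)) : Equiv.Perm ProjLine5 where
  toFun := Projectivization.map (glLin g).toLinearMap (glLin g).injective
  invFun := Projectivization.map (glLin g⁻¹).toLinearMap (glLin g⁻¹).injective
  left_inv x := by
    have key : (Projectivization.map (glLin g⁻¹).toLinearMap (glLin g⁻¹).injective) ∘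
        (Projectivization.map (glLin g).toLinearMap (glLin g).injective) = id := by
      rw [← Projectivization.map_comp,
        pmap_congr _
          (glLin (g⁻¹ * g)).injective (glLin_comp g⁻¹ g),
        pmap_congr (glLin (g⁻¹ * g)).injective (glLin 1).injective (by rw [inv_mul_cancel]),
        pmap_congr (glLin 1).injective Function.injective_id glLin_one,
        Projectivization.map_id]
    exact congrFun key x
  right_inv x := by
    have key : (Projectivization.map (glLin g).toLinearMap (glLin g).injective) ∘
        (Projectivization.map (glLin g⁻¹).toLinearMap (glLin g⁻¹).injective) = id := by
      rw [← Projectivization.map_comp,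
        pmap_congr _
          (glLin (g * g⁻¹)).injective (glLin_comp g g⁻¹),
        pmap_congr (glLin (g * g⁻¹)).injective (glLin 1).injective (by rw [mul_inv_cancel]),
        pmap_congr (glLin 1).injective Function.injective_id glLin_one,
        Projectivization.map_id]
    exact congrFun key x

/-- The action homomorphism `GL₂(GF(5)) → Sym(ℙ¹(GF(5)))`; its image is `PGL₂(5)` acting
on the projective line. -/
noncomputable def glPermHom : GL (Fin 2) (ZMod 5) →* Equiv.Perm ProjLine5 where
  toFun := glPerm
  map_one' := by
    ext x
    show Projectivization.map (glLin 1).toLinearMap (glLin 1).injective x = x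
    rw [pmap_congr (glLin 1).injective Function.injective_id glLin_one,
      Projectivization.map_id]
    rfl
  map_mul' g h := by
    ext x
    show Projectivization.map (glLin (g * h)).toLinearMap (glLin (g * h)).injective x = _
    have key : Projectivization.map (glLin (g * h)).toLinearMap (glLin (g * h)).injective =
        (Projectivization.map (glLin g).toLinearMap (glLin g).injective) ∘
          (Projectivization.map (glLin h).toLinearMap (glLin h).injective) := by
      rw [← Projectivization.map_comp,
        pmap_congr _
          (glLin (g * h)).injective (glLin_comp g h)]
    exact congrFun key x

/-- Transport of permutation groups along a bijection, as a group homomorphism. -/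
def permCongrHom {α β : Type*} (f : α ≃ β) : Equiv.Perm α →* Equiv.Perm β where
  toFun σ := f.symm.trans (σ.trans f)
  map_one' := by ext x; simp
  map_mul' σ τ := by ext x; simp

/-- The copy of `PGL₂(5)` inside the symmetric group on `Fin n`, obtained from an
identification `f` of the `n` points with the projective line over `GF(5)`. -/
noncomputable def pglSubgroup {n : ℕ} (f : Fin n ≃ ProjLine5) : Subgroup (Equiv.Perm (Fin n)) :=
  glPermHom.range.map (permCongrHom f.symm)


section SymAux

open Equiv.Perm

theorem aux_exists_equiv (n : ℕ) (hn : 5 ≤ n) (H : Subgroup (Equiv.Perm (Fin n)))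
    (hH : H.index = n) :
    ∃ (e : Equiv.Perm (Fin n) ≃* Equiv.Perm (Fin n)) (x : Fin n), ∀ g, g ∈ H ↔ e g x = x := by
  classical
  have hcard : Nat.card (Equiv.Perm (Fin n) ⧸ H) = n := hH
  have hfin : Finite (Equiv.Perm (Fin n) ⧸ H) := inferInstance
  let f : (Equiv.Perm (Fin n) ⧸ H) ≃ Fin n := Finite.equivFinOfCardEq hcard
  let φ := MulAction.toPermHom (Equiv.Perm (Fin n)) (Equiv.Perm (Fin n) ⧸ H)
  have hker : φ.ker = ⊥ := by
    by_contra hne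
    have hnt : Nontrivial φ.ker := (Subgroup.nontrivial_iff_ne_bot _).2 hne
    have h1 : alternatingGroup (Fin n) ≤ φ.ker :=
      Equiv.Perm.alternatingGroup_le_of_normal (by simpa using hn) hnt
    have h2 : φ.ker ≤ H := by
      rw [← Subgroup.normalCore_eq_ker]
      exact Subgroup.normalCore_le H
    have h3 := Subgroup.index_dvd_of_le (h1.trans h2)
    have : Nontrivial (Fin n) := Fin.nontrivial_iff_two_le.2 (by omega)
    rw [alternatingGroup.index_eq_two, hH] at h3
    have := Nat.le_of_dvd (by norm_num) h3
    omega
  have hinj : Function.Injective φ := (MonoidHom.ker_eq_bot_iff φ).1 hker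
  have hbij : Function.Bijective φ := by
    rw [Nat.bijective_iff_injective_and_card]
    refine ⟨hinj, ?_⟩
    rw [Nat.card_perm, Nat.card_perm, hcard]
    simp
  refine ⟨(MulEquiv.ofBijective φ hbij).trans f.permCongrHom, f ((1 : Equiv.Perm (Fin n)) : _ ⧸ H), ?_⟩
  intro g
  have : ((MulEquiv.ofBijective φ hbij).trans f.permCongrHom) g
      (f ((1 : Equiv.Perm (Fin n)) : _ ⧸ H)) = f ((g : Equiv.Perm (Fin n)) : _ ⧸ H) := by
    change f (φ g (f.symm (f _))) = _
    rw [Equiv.symm_apply_apply]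
    change f (g • ((1 : Equiv.Perm (Fin n)) : _ ⧸ H)) = _
    rw [MulAction.Quotient.smul_coe]
    simp
  rw [this, f.injective.eq_iff, eq_comm, QuotientGroup.eq]
  simp

theorem aux_stab_le (n : ℕ) (H : Subgroup (Equiv.Perm (Fin n))) (a : Fin n)
    (h : ∀ c d, c ≠ a → d ≠ a → c ≠ d → swap c d ∈ H) :
    MulAction.stabilizer (Equiv.Perm (Fin n)) a ≤ H := by
  intro g hg
  have hga : g a = a := hg
  have htop : H.comap (Equiv.Perm.ofSubtype (p := fun x : Fin n => x ≠ a)) = ⊤ := by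
    rw [eq_top_iff, ← Equiv.Perm.closure_isSwap, Subgroup.closure_le]
    rintro _ ⟨c, d, hcd, rfl⟩
    simp only [Subgroup.coe_comap, Set.mem_preimage, SetLike.mem_coe]
    rw [Equiv.Perm.ofSubtype_swap_eq]
    exact h _ _ c.2 d.2 (fun h => hcd (Subtype.ext h))
  have h1 : ∀ x, g x ≠ a ↔ x ≠ a := by
    intro x
    rw [not_iff_not]
    conv_lhs => rw [← hga]
    exact g.injective.eq_iff
  have h2 : ofSubtype (g.subtypePerm (p := fun x : Fin n => x ≠ a) h1) = g := by
    apply Equiv.Perm.ofSubtype_subtypePerm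
    intro x hx h3
    rw [h3] at hx
    exact hx hga
  have h4 : g.subtypePerm (p := fun x : Fin n => x ≠ a) h1 ∈ H.comap (Equiv.Perm.ofSubtype (p := fun x : Fin n => x ≠ a)) := by
    rw [htop]; trivial
  rw [Subgroup.mem_comap, h2] at h4
  exact h4

theorem aux_eq_stab (n : ℕ) (hn : 5 ≤ n) (H : Subgroup (Equiv.Perm (Fin n)))
    (hH : H.index = n) (a : Fin n)
    (h : ∀ c d, c ≠ a → d ≠ a → c ≠ d → swap c d ∈ H) :
    H = MulAction.stabilizer (Equiv.Perm (Fin n)) a := by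
  have hle := aux_stab_le n H a h
  symm
  apply Subgroup.eq_of_le_of_card_ge hle
  have h1 := H.card_mul_index
  have h2 := (MulAction.stabilizer (Equiv.Perm (Fin n)) a).card_mul_index
  rw [MulAction.index_stabilizer_of_transitive] at h2
  rw [hH, ← h2] at h1
  simp only [Nat.card_eq_fintype_card (α := Fin n), Fintype.card_fin] at h1
  exact (Nat.eq_of_mul_eq_mul_right (by omega) h1).le

/-- an automorphism preserving swaps: the corresponding subgroup is a stabilizer -/
theorem aux_swap_case (n : ℕ) (hn : 5 ≤ n) (H : Subgroup (Equiv.Perm (Fin n)))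
    (hH : H.index = n) (e : Equiv.Perm (Fin n) ≃* Equiv.Perm (Fin n)) (x : Fin n)
    (hx : ∀ g, g ∈ H ↔ e g x = x) (he : ∀ s : Equiv.Perm (Fin n), s.IsSwap → (e s).IsSwap) :
    ∃ x : Fin n, H = MulAction.stabilizer (Equiv.Perm (Fin n)) x := by
  have hform : ∀ s : Equiv.Perm (Fin n), s.IsSwap → s ∉ H → ∃ y, y ≠ x ∧ e s = swap x y := by
    intro s hs hsH
    obtain ⟨u, v, huv, h⟩ := he s hs
    rw [hx, h] at hsH
    by_cases hu : u = x
    · exact ⟨v, by rintro rfl; exact huv hu, by rw [h, hu]⟩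
    · by_cases hv : v = x
      · exact ⟨u, hu, by rw [h, hv, swap_comm]⟩
      · exact absurd (swap_apply_of_ne_of_ne (Ne.symm hu) (Ne.symm hv)) hsH
  have hcomm : ∀ s t : Equiv.Perm (Fin n), s.IsSwap → t.IsSwap → s ∉ H → t ∉ H →
      s * t = t * s → s = t := by
    intro s t hs ht hsH htH hst
    obtain ⟨y, hy, h1⟩ := hform s hs hsH
    obtain ⟨z, hz, h2⟩ := hform t ht htH
    have h3 : e s * e t = e t * e s := by rw [← map_mul, hst, map_mul]
    rw [h1, h2] at h3
    have h4 := congrArg (fun p : Equiv.Perm (Fin n) => p x) h3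
    simp only [Equiv.Perm.mul_apply, swap_apply_left] at h4
    have h5 : y = z := by
      by_contra hyz
      rw [swap_apply_of_ne_of_ne hz (Ne.symm hyz), swap_apply_of_ne_of_ne hy hyz] at h4
      exact hyz h4.symm
    apply e.injective
    rw [h1, h2, h5]
  have hdisj : ∀ a b c d : Fin n, a ≠ b → c ≠ d → a ≠ c → a ≠ d → b ≠ c → b ≠ d →
      swap a b ∉ H → swap c d ∈ H := by
    intro a b c d hab hcd hac had hbc hbd h1
    by_contra h2
    have h3 := hcomm _ _ ⟨a, b, hab, rfl⟩ ⟨c, d, hcd, rfl⟩ h1 h2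
      (Equiv.Perm.disjoint_swap_swap (by simp; tauto)).commute.eq
    have h4 := congrArg (fun p : Equiv.Perm (Fin n) => p a) h3
    simp only [swap_apply_left, swap_apply_of_ne_of_ne hac had] at h4
    exact hab h4.symm
  have hex : ∃ a b : Fin n, a ≠ b ∧ swap a b ∉ H := by
    by_contra hcon
    push Not at hcon
    have : H = ⊤ := by
      rw [eq_top_iff, ← Equiv.Perm.closure_isSwap, Subgroup.closure_le]
      rintro _ ⟨a, b, hab, rfl⟩
      exact hcon a b hab
    rw [this, Subgroup.index_top] at hH
    omega
  obtain ⟨a, b, hab, hH1⟩ := hex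
  by_cases hall : ∀ c, c ≠ a → c ≠ b → swap b c ∈ H
  · refine ⟨a, aux_eq_stab n hn H hH a ?_⟩
    intro c d hc hd hcd
    by_cases hcb : c = b
    · subst hcb; exact hall d hd (Ne.symm hcd)
    by_cases hdb : d = b
    · subst hdb; rw [swap_comm]; exact hall c hc hcd
    exact hdisj a b c d hab hcd (Ne.symm hc) (Ne.symm hd) (Ne.symm hcb) (Ne.symm hdb) hH1
  · push Not at hall
    obtain ⟨d, hda, hdb, hd⟩ := hall
    have key : ∀ c, c ≠ a → c ≠ b → swap a c ∈ H := by
      have key1 : ∀ c, c ≠ a → c ≠ b → c ≠ d → swap a c ∈ H := by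
        intro c hca hcb hcd
        exact hdisj b d a c (Ne.symm hdb) (Ne.symm hca) (Ne.symm hab) (Ne.symm hcb) hda
          (Ne.symm hcd) hd
      intro c hca hcb
      by_cases hcd : c = d
      · subst hcd
        have : ∃ k : Fin n, k ∉ ({a, b, c} : Finset (Fin n)) := by
          by_contra hcon
          push Not at hcon
          have h1 : (Finset.univ : Finset (Fin n)) ⊆ {a, b, c} := fun k _ => hcon k
          have h2 := Finset.card_le_card h1
          have h3 := Finset.card_le_three (a := a) (b := b) (c := c)
          simp only [Finset.card_univ, Fintype.card_fin] at h2
          omega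
        obtain ⟨k, hk⟩ := this
        simp only [Finset.mem_insert, Finset.mem_singleton, not_or] at hk
        obtain ⟨hka, hkb, hkc⟩ := hk
        have h1 := key1 k hka hkb hkc
        have h2 := hdisj a b k c hab hkc (Ne.symm hka) (Ne.symm hca) (Ne.symm hkb) (Ne.symm hcb) hH1
        have h3 : swap a c = swap k c * swap a k * swap k c := by
          rw [swap_mul_swap_mul_swap (Ne.symm hka) (Ne.symm hca)]
          exact swap_comm _ _
        rw [h3]
        exact H.mul_mem (H.mul_mem h2 h1) h2
      · exact key1 c hca hcb hcd
    refine ⟨b, aux_eq_stab n hn H hH b ?_⟩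
    intro c d hc hd hcd
    by_cases hca : c = a
    · subst hca; exact key d (Ne.symm hcd) hd
    by_cases hda : d = a
    · subst hda; rw [swap_comm]; exact key c hcd hc
    exact hdisj a b c d hab hcd (Ne.symm hca) (Ne.symm hda) (Ne.symm hc) (Ne.symm hd) hH1

theorem aux_centralizer_card (n : ℕ) (e : Equiv.Perm (Fin n) ≃* Equiv.Perm (Fin n))
    (t : Equiv.Perm (Fin n)) :
    Nat.card (Subgroup.centralizer {e t}) = Nat.card (Subgroup.centralizer {t}) := by
  symm
  refine Nat.card_congr (e.toEquiv.subtypeEquiv ?_)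
  intro g
  change g ∈ Subgroup.centralizer {t} ↔ e g ∈ Subgroup.centralizer {e t}
  rw [Subgroup.mem_centralizer_singleton_iff, Subgroup.mem_centralizer_singleton_iff,
    ← map_mul, ← map_mul, e.injective.eq_iff]

open Nat in
theorem aux_card_of_type (n k : ℕ) (t : Equiv.Perm (Fin n))
    (h : t.cycleType = Multiset.replicate (k + 1) 2) :
    2 * (k + 1) ≤ n ∧
    Nat.card (Subgroup.centralizer {t}) = (n - 2 * (k + 1))! * 2 ^ (k + 1) * (k + 1)! := by
  constructor
  · have h1 := t.sum_cycleType
    have h2 := Finset.card_le_univ t.support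
    rw [← h1, h] at h2
    simp at h2
    omega
  · rw [Equiv.Perm.nat_card_centralizer, h, Multiset.toFinset_replicate]
    rw [Finset.prod_congr (if_neg (Nat.succ_ne_zero k)) (fun _ _ => rfl)]
    rw [Finset.prod_singleton, Multiset.count_replicate_self, Multiset.prod_replicate,
      Multiset.sum_replicate, Fintype.card_fin, smul_eq_mul, mul_comm (k + 1) 2]

theorem aux_type_image (n : ℕ) (e : Equiv.Perm (Fin n) ≃* Equiv.Perm (Fin n))
    (t : Equiv.Perm (Fin n)) (ht : orderOf t = 2) :
    ∃ k, (e t).cycleType = Multiset.replicate (k + 1) 2 := by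
  have h : orderOf (e t) = 2 := by rw [← ht]; exact MulEquiv.orderOf_eq e t
  obtain ⟨k, hk⟩ := Equiv.Perm.cycleType_prime_order (σ := e t) (by rw [h]; exact Nat.prime_two)
  exact ⟨k, by rw [hk, h]⟩

open Nat in
theorem aux_arith1 (m j : ℕ) (hm : 1 ≤ m) :
    2 ^ (j + 1) * (j + 2)! * m ! < (m + 2 * j + 2)! := by
  induction j with
  | zero =>
    have h0 := Nat.factorial_pos m
    have h1 : (m + 2 * 0 + 2)! = ((m + 2) * (m + 1)) * m ! := by
      rw [show m + 2 * 0 + 2 = m + 1 + 1 by ring, Nat.factorial_succ, Nat.factorial_succ]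
      ring
    have h2 : 2 ^ (0 + 1) * (0 + 2)! * m ! = 4 * m ! := by simp [Nat.factorial]
    rw [h1, h2]
    apply Nat.mul_lt_mul_of_pos_right _ h0
    nlinarith
  | succ j ih =>
    have h1 : (m + 2 * (j + 1) + 2)! = (m + 2 * j + 4) * ((m + 2 * j + 3) * (m + 2 * j + 2)!) := by
      rw [show m + 2 * (j + 1) + 2 = (m + 2 * j + 2) + 1 + 1 by ring, Nat.factorial_succ,
        Nat.factorial_succ]
    have h2 : 2 ^ (j + 1 + 1) * (j + 1 + 2)! * m ! =
        2 * (j + 3) * (2 ^ (j + 1) * (j + 2)! * m !) := by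
      rw [show j + 1 + 2 = (j + 2) + 1 by ring, Nat.factorial_succ]
      ring
    rw [h1, h2, ← mul_assoc (_ + _) (_ + _) (_ !)]
    refine Nat.mul_lt_mul_of_le_of_lt ?_ ih ?_
    · nlinarith
    · positivity

open Nat in
theorem aux_arith0 (j : ℕ) :
    2 ^ (j + 3) * (j + 4)! < (2 * j + 6)! := by
  induction j with
  | zero => decide
  | succ j ih =>
    have h1 : (2 * (j + 1) + 6)! = (2 * j + 8) * ((2 * j + 7) * (2 * j + 6)!) := by
      rw [show 2 * (j + 1) + 6 = (2 * j + 6) + 1 + 1 by ring, Nat.factorial_succ,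
        Nat.factorial_succ]
    have h2 : 2 ^ (j + 1 + 3) * (j + 1 + 4)! =
        2 * (j + 5) * (2 ^ (j + 3) * (j + 4)!) := by
      rw [show j + 1 + 4 = (j + 4) + 1 by ring, Nat.factorial_succ]
      ring
    rw [h1, h2, ← mul_assoc (_ + _) (_ + _) (_ !)]
    refine Nat.mul_lt_mul_of_le_of_lt ?_ ih ?_
    · nlinarith
    · positivity

open Nat in
theorem aux_arith (n k : ℕ) (hn : 5 ≤ n) (hk : 2 * (k + 1) ≤ n)
    (h : (n - 2 * (k + 1))! * 2 ^ (k + 1) * (k + 1)! = (n - 2)! * 2) :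
    k = 0 ∨ (n = 6 ∧ k = 2) := by
  obtain ⟨m, rfl⟩ := Nat.exists_eq_add_of_le hk
  rcases k with _ | j
  · left; rfl
  right
  have e1 : 2 * (j + 1 + 1) + m - 2 * (j + 1 + 1) = m := by omega
  have e2 : 2 * (j + 1 + 1) + m - 2 = m + 2 * j + 2 := by omega
  rw [e1, e2] at h
  have h' : 2 ^ (j + 1) * (j + 2)! * m ! = (m + 2 * j + 2)! := by
    apply Nat.eq_of_mul_eq_mul_right (show 0 < 2 by norm_num)
    rw [← h]; ring
  rcases Nat.eq_zero_or_pos m with rfl | hm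
  · rcases j with _ | _ | j
    · omega
    · constructor <;> rfl
    · exfalso
      have := aux_arith0 j
      rw [show 0 + 2 * (j + 1 + 1) + 2 = 2 * j + 6 by ring] at h'
      simp only [Nat.factorial_zero, mul_one] at h'
      rw [show j + 1 + 1 + 1 = j + 3 by ring, show j + 1 + 1 + 2 = j + 4 by ring] at h'
      omega
  · exact absurd h' (aux_arith1 m j hm).ne

theorem aux_swap_image (n : ℕ) (hn : 5 ≤ n) (e : Equiv.Perm (Fin n) ≃* Equiv.Perm (Fin n))
    (t : Equiv.Perm (Fin n)) (ht : t.IsSwap) :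
    (e t).IsSwap ∨ (n = 6 ∧ (e t).cycleType = Multiset.replicate 3 2) := by
  obtain ⟨k, hk⟩ := aux_type_image n e t ht.orderOf
  obtain ⟨h1, h2⟩ := aux_card_of_type n k _ hk
  obtain ⟨h3, h4⟩ := aux_card_of_type n 0 t (Equiv.Perm.isSwap_iff_cycleType.1 ht)
  rw [aux_centralizer_card, h4] at h2
  rcases aux_arith n k hn h1 (by rw [← h2]; simp) with rfl | ⟨rfl, rfl⟩
  · left; exact Equiv.Perm.isSwap_iff_cycleType.2 hk
  · right; exact ⟨rfl, hk⟩

theorem aux_swap_of_conj {n : ℕ} {s t : Equiv.Perm (Fin n)} (h : IsConj s t) (hs : s.IsSwap) :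
    t.IsSwap := by
  rw [Equiv.Perm.isSwap_iff_cycleType] at *
  rw [← Equiv.Perm.isConj_iff_cycleType_eq.1 h, hs]

theorem aux_conj_of_swap {n : ℕ} {s t : Equiv.Perm (Fin n)} (hs : s.IsSwap) (ht : t.IsSwap) :
    IsConj s t := by
  rw [Equiv.Perm.isConj_iff_cycleType_eq, Equiv.Perm.isSwap_iff_cycleType.1 hs,
    Equiv.Perm.isSwap_iff_cycleType.1 ht]

theorem aux_all_swap {n : ℕ} (e : Equiv.Perm (Fin n) ≃* Equiv.Perm (Fin n))
    (t : Equiv.Perm (Fin n)) (ht : t.IsSwap) (het : (e t).IsSwap) :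
    ∀ s : Equiv.Perm (Fin n), s.IsSwap → (e s).IsSwap := by
  intro s hs
  exact aux_swap_of_conj (e.toMonoidHom.map_isConj (aux_conj_of_swap ht hs)) het

theorem aux_main (n : ℕ) (hn : 5 ≤ n) (H : Subgroup (Equiv.Perm (Fin n)))
    (hH : H.index = n) (h6 : n ≠ 6 ∨ ∃ t ∈ H, t.IsSwap) :
    ∃ x : Fin n, H = MulAction.stabilizer (Equiv.Perm (Fin n)) x := by
  obtain ⟨e, x, hx⟩ := aux_exists_equiv n hn H hH
  apply aux_swap_case n hn H hH e x hx
  rcases h6 with h6 | ⟨t, htH, ht⟩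
  · intro s hs
    exact (aux_swap_image n hn e s hs).resolve_right (fun h => h6 h.1)
  · refine aux_all_swap e t ht ((aux_swap_image n hn e t ht).resolve_right ?_)
    rintro ⟨rfl, h⟩
    have h1 := (e t).sum_cycleType
    rw [h] at h1
    have h2 : (e t).support = Finset.univ := by
      rw [← Finset.card_eq_iff_eq_univ, ← h1]; simp
    have h3 : x ∈ (e t).support := by rw [h2]; simp
    rw [Equiv.Perm.mem_support] at h3
    exact h3 ((hx t).1 htH)

/-- in the exotic case, triple transpositions are mapped to swaps -/
theorem aux_triple (H : Subgroup (Equiv.Perm (Fin 6)))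
    (e : Equiv.Perm (Fin 6) ≃* Equiv.Perm (Fin 6)) (x : Fin 6) (hx : ∀ g, g ∈ H ↔ e g x = x)
    (hno : ∀ t ∈ H, ¬ t.IsSwap) (u : Equiv.Perm (Fin 6))
    (hu : u.cycleType = Multiset.replicate 3 2) : (e u).IsSwap := by
  have hnsw : ∀ t : Equiv.Perm (Fin 6), t.IsSwap → ¬ (e t).IsSwap := by
    intro t ht het
    obtain ⟨a, b, hab, h⟩ : ∃ a b : Fin 6, a ≠ b ∧ swap a b x = x := by
      clear hx; revert x; decide
    have h1 : IsConj (e t) (swap a b) := aux_conj_of_swap het ⟨a, b, hab, rfl⟩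
    have h2 := e.symm.toMonoidHom.map_isConj h1
    have h3 : IsConj t (e.symm (swap a b)) := by simpa using h2
    refine hno _ ?_ (aux_swap_of_conj h3 ht)
    rw [hx, MulEquiv.apply_symm_apply, h]
  have ht : (swap (0 : Fin 6) 1).IsSwap := ⟨0, 1, by decide, rfl⟩
  have het := ((aux_swap_image 6 (by norm_num) e _ ht).resolve_left (hnsw _ ht)).2
  have hord : orderOf u = 2 := by
    rw [← Equiv.Perm.lcm_cycleType, hu]; rfl
  obtain ⟨k, hk⟩ := aux_type_image 6 e u hord
  obtain ⟨h1, h2⟩ := aux_card_of_type 6 k _ hk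
  obtain ⟨h3, h4⟩ := aux_card_of_type 6 2 u hu
  rw [aux_centralizer_card, h4] at h2
  have hk3 : k < 3 := by omega
  interval_cases k
  · exact Equiv.Perm.isSwap_iff_cycleType.2 hk
  · exfalso; revert h2; decide
  · exfalso
    have h5 : IsConj (e u) (e (swap (0 : Fin 6) 1)) := by
      rw [Equiv.Perm.isConj_iff_cycleType_eq, hk, het]
    have h6 := e.symm.toMonoidHom.map_isConj h5
    have h7 : IsConj u (swap (0 : Fin 6) 1) := by simpa using h6
    have h8 := Equiv.Perm.isConj_iff_cycleType_eq.1 h7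
    rw [hu, Equiv.Perm.isSwap_iff_cycleType.1 ht] at h8
    have := congrArg Multiset.card h8
    simp at this

theorem aux_exotic (G P : Subgroup (Equiv.Perm (Fin 6))) (hG : G.index = 6) (hP : P.index = 6)
    (hGs : ∀ t ∈ G, ¬ t.IsSwap) (hPs : ∀ t ∈ P, ¬ t.IsSwap) :
    ∃ h : Equiv.Perm (Fin 6), ∀ g, g ∈ G ↔ h * g * h⁻¹ ∈ P := by
  obtain ⟨e, x, hx⟩ := aux_exists_equiv 6 (by norm_num) G hG
  obtain ⟨q, y, hy⟩ := aux_exists_equiv 6 (by norm_num) P hP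
  obtain ⟨u, hu⟩ : ∃ u : Equiv.Perm (Fin 6), u.cycleType = Multiset.replicate 3 2 := by
    refine (Equiv.Perm.exists_with_cycleType_iff (Fin 6)).2 ⟨by simp, ?_⟩
    intro a ha
    rw [Multiset.eq_of_mem_replicate ha]
  have heu := aux_triple G e x hx hGs u hu
  obtain ⟨a, b, hab, h⟩ : ∃ a b : Fin 6, a ≠ b ∧ swap a b x = x := by
    clear hx; revert x; decide
  have h1 : IsConj (e u) (swap a b) := aux_conj_of_swap heu ⟨a, b, hab, rfl⟩
  have h2 := e.symm.toMonoidHom.map_isConj h1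
  have h3 : IsConj u (e.symm (swap a b)) := by simpa using h2
  have h4 : e.symm (swap a b) ∈ G := by
    rw [hx, MulEquiv.apply_symm_apply, h]
  have h5 := aux_triple P q y hy hPs (e.symm (swap a b))
    (by rw [← Equiv.Perm.isConj_iff_cycleType_eq.1 h3, hu])
  obtain ⟨z, hz⟩ := aux_main 6 (by norm_num) (G.map (q : Equiv.Perm (Fin 6) →* Equiv.Perm (Fin 6)))
    (by rw [Subgroup.index_map_equiv, hG]) (Or.inr ⟨_, ⟨_, h4, rfl⟩, h5⟩)
  refine ⟨q.symm (swap z y), fun g => ?_⟩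
  have h6 : g ∈ G ↔ q g z = z := by
    have : q g ∈ G.map (q : Equiv.Perm (Fin 6) →* Equiv.Perm (Fin 6)) ↔ g ∈ G := by
      constructor
      · rintro ⟨g', hg', h⟩
        rw [← q.injective h]; exact hg'
      · intro hg; exact ⟨g, hg, rfl⟩
    rw [← this, hz]; rfl
  rw [h6, hy]
  simp only [map_mul, map_inv, MulEquiv.apply_symm_apply, Equiv.Perm.mul_apply, swap_inv,
    swap_apply_right]
  rw [← Equiv.eq_symm_apply (swap z y), symm_swap, swap_apply_right]

end SymAux


section PglAux

theorem aux_glPerm_mk (g : GL (Fin 2) (ZMod 5)) (v : Fin 2 → ZMod 5) (hv : v ≠ 0) :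
    ∃ h, glPermHom g (Projectivization.mk (ZMod 5) v hv) =
      Projectivization.mk (ZMod 5) (g.1.mulVec v) h := by
  have h : glLin g v = g.1.mulVec v := rfl
  refine ⟨by rw [← h]; simpa using hv, rfl⟩

theorem aux_fixed_eq (g : GL (Fin 2) (ZMod 5)) (p : ProjLine5) (hp : glPermHom g p = p) :
    p.rep 0 * (g.1 1 0 * p.rep 0 + g.1 1 1 * p.rep 1) =
      p.rep 1 * (g.1 0 0 * p.rep 0 + g.1 0 1 * p.rep 1) := by
  obtain ⟨h, h1⟩ := aux_glPerm_mk g p.rep p.rep_nonzero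
  rw [Projectivization.mk_rep, hp] at h1
  nth_rewrite 1 [← Projectivization.mk_rep p] at h1
  rw [Projectivization.mk_eq_mk_iff'] at h1
  obtain ⟨a, ha⟩ := h1
  have h0 := congrFun ha 0
  have h1 := congrFun ha 1
  simp only [Matrix.mulVec, dotProduct, Fin.sum_univ_two, Pi.smul_apply, smul_eq_mul] at h0 h1
  linear_combination -(g.1 1 0 * p.rep 0 + g.1 1 1 * p.rep 1) * h0
    + (g.1 0 0 * p.rep 0 + g.1 0 1 * p.rep 1) * h1

theorem aux_ne (p q : ProjLine5) (h : p ≠ q) :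
    p.rep 0 * q.rep 1 - p.rep 1 * q.rep 0 ≠ 0 := by
  intro h0
  apply h
  rw [← Projectivization.mk_rep p, ← Projectivization.mk_rep q, Projectivization.mk_eq_mk_iff']
  have hq := q.rep_nonzero
  by_cases hq0 : q.rep 0 = 0
  · have hq1 : q.rep 1 ≠ 0 := by
      intro hq1; apply hq; ext i; fin_cases i <;> simp [hq0, hq1]
    refine ⟨p.rep 1 / q.rep 1, ?_⟩
    have hp0 : p.rep 0 = 0 := by
      rw [hq0] at h0; simpa [hq1] using h0
    ext i; fin_cases i
    · simp [hq0, hp0]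
    · simp [hq1]
  · refine ⟨p.rep 0 / q.rep 0, ?_⟩
    ext i; fin_cases i
    · simp [hq0]
    · simp only [Fin.mk_one, Pi.smul_apply, smul_eq_mul]
      field_simp
      linear_combination h0

theorem aux_three (g : GL (Fin 2) (ZMod 5)) (p q r : ProjLine5) (hpq : p ≠ q) (hpr : p ≠ r)
    (hqr : q ≠ r) (hp : glPermHom g p = p) (hq : glPermHom g q = q) (hr : glPermHom g r = r) :
    g.1 1 0 = 0 ∧ g.1 0 1 = 0 ∧ g.1 0 0 = g.1 1 1 := by
  have e1 := aux_fixed_eq g p hp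
  have e2 := aux_fixed_eq g q hq
  have e3 := aux_fixed_eq g r hr
  have hD := mul_ne_zero (mul_ne_zero (aux_ne p q hpq) (aux_ne p r hpr)) (aux_ne q r hqr)
  generalize p.rep 0 = x1 at *
  generalize p.rep 1 = y1 at *
  generalize q.rep 0 = x2 at *
  generalize q.rep 1 = y2 at *
  generalize r.rep 0 = x3 at *
  generalize r.rep 1 = y3 at *
  generalize g.1 1 0 = c at *
  generalize g.1 0 1 = b at *
  generalize g.1 0 0 = a at *
  generalize g.1 1 1 = d at *
  refine ⟨?_, ?_, ?_⟩
  · refine (mul_eq_zero.1 (?_ : c * _ = 0)).resolve_right hD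
    linear_combination (x2 * y2 * y3 ^ 2 - x3 * y3 * y2 ^ 2) * e1
      - (x1 * y1 * y3 ^ 2 - x3 * y3 * y1 ^ 2) * e2 + (x1 * y1 * y2 ^ 2 - x2 * y2 * y1 ^ 2) * e3
  · refine (mul_eq_zero.1 (?_ : b * _ = 0)).resolve_right hD
    linear_combination -(x2 ^ 2 * x3 * y3 - x3 ^ 2 * x2 * y2) * e1
      + (x1 ^ 2 * x3 * y3 - x3 ^ 2 * x1 * y1) * e2 - (x1 ^ 2 * x2 * y2 - x2 ^ 2 * x1 * y1) * e3
  · rw [← sub_eq_zero]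
    refine (mul_eq_zero.1 (?_ : (a - d) * _ = 0)).resolve_right hD
    linear_combination (x2 ^ 2 * y3 ^ 2 - x3 ^ 2 * y2 ^ 2) * e1
      - (x1 ^ 2 * y3 ^ 2 - x3 ^ 2 * y1 ^ 2) * e2 + (x1 ^ 2 * y2 ^ 2 - x2 ^ 2 * y1 ^ 2) * e3

theorem aux_diag_fixes (g : GL (Fin 2) (ZMod 5))
    (h : g.1 1 0 = 0 ∧ g.1 0 1 = 0 ∧ g.1 0 0 = g.1 1 1) : glPermHom g = 1 := by
  obtain ⟨h1, h2, h3⟩ := h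
  ext p
  obtain ⟨h, hh⟩ := aux_glPerm_mk g p.rep p.rep_nonzero
  rw [Projectivization.mk_rep] at hh
  rw [hh, Equiv.Perm.one_apply]
  refine Eq.trans ?_ (Projectivization.mk_rep p)
  rw [Projectivization.mk_eq_mk_iff']
  refine ⟨g.1 0 0, ?_⟩
  ext i
  fin_cases i
  · simp [Matrix.mulVec, dotProduct, Fin.sum_univ_two, h2]
  · simp [Matrix.mulVec, dotProduct, Fin.sum_univ_two, h1, h3]

theorem aux_card_proj : Nat.card ProjLine5 = 6 := by
  rw [Projectivization.card_of_finrank_two (ZMod 5) (Fin 2 → ZMod 5) (by simp)]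
  simp

theorem aux_ker_card : Nat.card (glPermHom.ker) = 4 := by
  let f := (Finite.equivFinOfCardEq aux_card_proj).symm
  have hr : glPermHom.ker = (Matrix.GeneralLinearGroup.scalar (Fin 2) (R := ZMod 5)).range := by
    ext g
    constructor
    · intro hg
      have hg' : ∀ p, glPermHom g p = p := by
        intro p; rw [(MonoidHom.mem_ker).1 hg]; rfl
      have h3 := aux_three g (f 0) (f 1) (f 2) (by simp) (by simp) (by simp) (hg' _) (hg' _)
        (hg' _)
      obtain ⟨h1, h2, h3⟩ := h3
      have hne : g.1 0 0 ≠ 0 := by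
        intro h0
        have hdet := (Matrix.isUnit_iff_isUnit_det _).1 g.isUnit
        rw [Matrix.det_fin_two, h1, h0] at hdet
        simp at hdet
      refine ⟨Units.mk0 _ hne, ?_⟩
      ext i j
      fin_cases i <;> fin_cases j <;> simp [Matrix.GeneralLinearGroup.coe_scalar, h1, h2, h3]
    · rintro ⟨u, rfl⟩
      rw [MonoidHom.mem_ker]
      apply aux_diag_fixes
      simp [Matrix.GeneralLinearGroup.coe_scalar]
  have hinj : Function.Injective (Matrix.GeneralLinearGroup.scalar (Fin 2) (R := ZMod 5)) := by
    intro u v huv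
    have := congrArg (fun g : GL (Fin 2) (ZMod 5) => g.1 0 0) huv
    simp [Matrix.GeneralLinearGroup.coe_scalar] at this
    exact Units.ext this
  rw [hr, Nat.card_congr (MonoidHom.ofInjective hinj).toEquiv.symm, Nat.card_eq_fintype_card,
    ZMod.card_units]

theorem aux_range_card : Nat.card (glPermHom.range) = 120 := by
  have h1 := glPermHom.ker.card_mul_index
  rw [Subgroup.index_ker, aux_ker_card, Matrix.card_GL_field] at h1
  rw [Fin.prod_univ_two, ZMod.card] at h1
  have h2 : (5 ^ 2 - 5 ^ ((0 : Fin 2) : ℕ)) * (5 ^ 2 - 5 ^ ((1 : Fin 2) : ℕ)) = 480 := by norm_num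
  rw [h2] at h1
  omega

theorem aux_mem_pgl {n : ℕ} (f : Fin n ≃ ProjLine5) (g : Equiv.Perm (Fin n)) :
    g ∈ pglSubgroup f ↔ ∃ r, ∀ x, f (g x) = glPermHom r (f x) := by
  constructor
  · rintro ⟨_, ⟨r, rfl⟩, rfl⟩
    refine ⟨r, fun x => ?_⟩
    simp [_root_.permCongrHom]
  · rintro ⟨r, hr⟩
    refine ⟨_, ⟨r, rfl⟩, ?_⟩
    ext x
    simp [_root_.permCongrHom, ← hr]

theorem aux_pgl_index (f : Fin 6 ≃ ProjLine5) : (pglSubgroup f).index = 6 := by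
  have hinj : Function.Injective (_root_.permCongrHom f.symm) := by
    intro σ τ h
    ext p
    have := congrArg (fun g : Equiv.Perm (Fin 6) => f (g (f.symm p))) h
    simpa [_root_.permCongrHom] using this
  have h1 := (pglSubgroup f).card_mul_index
  rw [Nat.card_perm] at h1
  have h2 : Nat.card (pglSubgroup f) = 120 := by
    rw [pglSubgroup, Subgroup.card_map_of_injective hinj, aux_range_card]
  rw [h2] at h1
  have h3 : (Nat.card (Fin 6)).factorial = 720 := by simp; decide
  omega

theorem aux_pgl_no_swap (f : Fin 6 ≃ ProjLine5) : ∀ t ∈ pglSubgroup f, ¬ t.IsSwap := by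
  rintro _ ht ⟨a, b, hab, rfl⟩
  rw [aux_mem_pgl] at ht
  obtain ⟨r, hr⟩ := ht
  obtain ⟨c, d, e, h⟩ : ∃ c d e : Fin 6, c ≠ d ∧ c ≠ e ∧ d ≠ e ∧ swap a b c = c ∧ swap a b d = d ∧
    swap a b e = e := by clear hr; revert a b; decide
  obtain ⟨hcd, hce, hde, hc, hd, he⟩ := h
  have h1 := aux_diag_fixes r (aux_three r (f c) (f d) (f e) (by simpa using hcd)
    (by simpa using hce) (by simpa using hde) (by rw [← hr, hc]) (by rw [← hr, hd])
    (by rw [← hr, he]))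
  have h2 := hr a
  rw [h1, swap_apply_left, Equiv.Perm.one_apply, f.injective.eq_iff] at h2
  exact hab h2.symm

end PglAux

/-- For `n ≥ 5`, a subgroup of `Sₙ` of index `n` is, up to conjugacy, the stabilizer of a
point, or `n = 6` and it acts on the six points as `PGL₂(5)` acts on the projective line
over `GF(5)`. -/
theorem subgroup_of_index_n_in_symmetric (n : ℕ) (hn : 5 ≤ n)
    (G : Subgroup (Equiv.Perm (Fin n))) (hG : G.index = n) :
    (∃ x : Fin n, G = MulAction.stabilizer (Equiv.Perm (Fin n)) x) ∨
      (n = 6 ∧ ∃ f : Fin n ≃ ProjLine5, G = pglSubgroup f) := by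
  by_cases h : n ≠ 6 ∨ ∃ t ∈ G, t.IsSwap
  · exact Or.inl (aux_main n hn G hG h)
  · push Not at h
    obtain ⟨rfl, hs⟩ := h
    right
    refine ⟨rfl, ?_⟩
    let f := (Finite.equivFinOfCardEq aux_card_proj).symm
    obtain ⟨k, hk⟩ := aux_exotic G (pglSubgroup f) hG (aux_pgl_index f) hs (aux_pgl_no_swap f)
    refine ⟨k.trans f, ?_⟩
    ext g
    rw [hk, aux_mem_pgl, aux_mem_pgl]
    refine exists_congr fun r => ⟨fun h x => ?_, fun h x => ?_⟩
    · simpa using h (k x)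
    · simpa using h (k⁻¹ x)
end

section
/- Let n ≥ 3 be odd. There is no rank-n integer lattice Λ in ℝⁿ invariant under the group C₂ⁿ⁺ ⋊ Sₙ (even sign changes together with all coordinate permutations) other than integer multiples of ℤⁿ, Dₙ, and the lattice of integer vectors with all coordinates of equal parity, all of which are invariant under the full hyperoctahedral group. -/
open Equiv

/-- The signed permutation of `ℤⁿ` determined by a sign vector `v` and a permutation `σ`:
`x ↦ (i ↦ v i * x (σ⁻¹ i))`. -/
def signedPerm {n : ℕ} (v : Fin n → ℤˣ) (σ : Perm (Fin n)) (x : Fin n → ℤ) : Fin n → ℤ :=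
  fun i => (v i : ℤ) * x (σ.symm i)

/-- `Λ` is a rank-`n` lattice in `ℤⁿ`: it is spanned by `n` linearly independent
vectors. -/
def IsFullLattice {n : ℕ} (Λ : Submodule ℤ (Fin n → ℤ)) : Prop :=
  ∃ b : Fin n → (Fin n → ℤ), LinearIndependent ℤ b ∧ Λ = Submodule.span ℤ (Set.range b)

/-- The scaling of a lattice by an integer `s`. -/
def scl {n : ℕ} (s : ℤ) (p : Submodule ℤ (Fin n → ℤ)) : Submodule ℤ (Fin n → ℤ) :=
  p.map (s • (LinearMap.id : (Fin n → ℤ) →ₗ[ℤ] (Fin n → ℤ)))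

/-- The lattice `Dₙ` of integer vectors with even coordinate sum. -/
def Dlat (n : ℕ) : Submodule ℤ (Fin n → ℤ) where
  carrier := {x | (2 : ℤ) ∣ ∑ i, x i}
  add_mem' := by
    intro a b ha hb
    simpa [Finset.sum_add_distrib] using dvd_add ha hb
  zero_mem' := by simp
  smul_mem' := by
    intro c x hx
    simpa [Finset.mul_sum] using hx.mul_left c

/-- The lattice of integer vectors all of whose coordinates have the same parity. -/
def sameParity (n : ℕ) : Submodule ℤ (Fin n → ℤ) where
  carrier := {x | ∀ i j, (2 : ℤ) ∣ (x i - x j)}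
  add_mem' := by
    intro a b ha hb i j
    have := dvd_add (ha i j) (hb i j)
    simpa [Pi.add_apply, add_sub_add_comm] using this
  zero_mem' := by simp
  smul_mem' := by
    intro c x hx i j
    have := (hx i j).mul_left c
    simpa [Pi.smul_apply, smul_eq_mul, mul_sub] using this

/-- The basis of the lattice `Λ₀`: `v₁ = (1,…,1)` and, for `2 ≤ k ≤ n`, `v_k` having `-1`
in positions `1` and `k` and `1` elsewhere (`0`-indexed: positions `0` and `k`). -/
def L0basis (n : ℕ) : Fin n → (Fin n → ℤ) :=
  fun k i => if k.val = 0 then 1 else if i.val = 0 ∨ i = k then -1 else 1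

/-- The lattice `Λ₀`. -/
def L0 (n : ℕ) : Submodule ℤ (Fin n → ℤ) := Submodule.span ℤ (Set.range (L0basis n))

/-- The basis of the lattice `Λ₁`: `w_k` has `-1` in position `k` and `1` elsewhere. -/
def L1basis (n : ℕ) : Fin n → (Fin n → ℤ) :=
  fun k i => if i = k then -1 else 1

/-- The lattice `Λ₁`. -/
def L1 (n : ℕ) : Submodule ℤ (Fin n → ℤ) := Submodule.span ℤ (Set.range (L1basis n))

theorem aux_cong {n : ℕ} (M : Submodule ℤ (Fin n → ℤ)) (h2 : ∀ i, Pi.single i (2 : ℤ) ∈ M)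
    (x y : Fin n → ℤ) (h : ∀ i, (2 : ℤ) ∣ x i - y i) (hx : x ∈ M) : y ∈ M := by
  choose c hc using h
  have e : y = x - ∑ i, c i • (Pi.single i (2 : ℤ) : Fin n → ℤ) := by
    funext j
    simp only [Pi.sub_apply, Finset.sum_apply, Pi.smul_apply, Pi.single_apply, smul_eq_mul,
      mul_ite, mul_zero, Finset.sum_ite_eq, Finset.mem_univ, if_true]
    have := hc j
    linarith
  rw [e]
  exact M.sub_mem hx (M.sum_mem fun i _ => M.smul_mem _ (h2 i))

theorem aux_class {n : ℕ} (o : Fin n) (M : Submodule ℤ (Fin n → ℤ))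
    (h2 : ∀ i, Pi.single i (2 : ℤ) ∈ M)
    (hp : ∀ (σ : Perm (Fin n)), ∀ x ∈ M, (fun i => x (σ.symm i)) ∈ M)
    (y : Fin n → ℤ) (hy : y ∈ M) (hy1 : y o = 1) :
    M = ⊤ ∨ M = Dlat n ∨ M = sameParity n := by
  by_cases hs : ∀ x ∈ M, ∀ i j, (2 : ℤ) ∣ x i - x j
  · right; right
    apply le_antisymm
    · exact fun x hx => hs x hx
    · intro x hx
      have hx' : ∀ i j, (2 : ℤ) ∣ x i - x j := hx
      rcases Int.even_or_odd (x o) with ⟨k, hk⟩ | ⟨k, hk⟩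
      · refine aux_cong M h2 0 x (fun i => ?_) M.zero_mem
        have := hx' i o
        simp only [Pi.zero_apply]
        omega
      · refine aux_cong M h2 y x (fun i => ?_) hy
        have := hx' i o
        have := hs y hy i o
        omega
  · push Not at hs
    obtain ⟨x, hx, i, j, hij⟩ := hs
    have hne : i ≠ j := by
      rintro rfl
      simp at hij
    have hd : ∀ a b : Fin n, (Pi.single a 1 - Pi.single b 1 : Fin n → ℤ) ∈ M := by
      intro a b
      by_cases hab : a = b
      · subst hab
        simp
      let σ : Perm (Fin n) := swap (swap i a j) b * swap i a
      have h1 : σ i = a := by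
        have : a ≠ swap i a j := by
          intro h
          have h' : swap i a i = swap i a j := by simpa using h
          exact hne ((swap i a).injective h')
        simp only [σ, Perm.mul_apply, swap_apply_left]
        exact swap_apply_of_ne_of_ne this hab
      have h1' : σ j = b := by
        simp [σ, Perm.mul_apply]
      have hz := hp σ x hx
      have hw := M.sub_mem hz (hp (swap a b) _ hz)
      refine aux_cong M h2 _ _ (fun k => ?_) hw
      have e1 : σ.symm a = i := by rw [← h1]; simp
      have e2 : σ.symm b = j := by rw [← h1']; simp
      simp only [Pi.sub_apply, symm_swap, Pi.single_apply]
      by_cases ka : k = a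
      · subst ka
        simp only [swap_apply_left, e1, e2, if_true, if_neg hab]
        omega
      · by_cases kb : k = b
        · subst kb
          simp only [swap_apply_right, e1, e2, if_true, if_neg ka]
          omega
        · simp [swap_apply_of_ne_of_ne ka kb, ka, kb]
    have hdec : ∀ x : Fin n → ℤ, x - Pi.single o (∑ i, x i) ∈ M := by
      intro x
      have e : x - Pi.single o (∑ i, x i) =
          ∑ i, x i • (Pi.single i 1 - Pi.single o 1 : Fin n → ℤ) := by
        funext k
        simp only [Pi.sub_apply, Finset.sum_apply, Pi.smul_apply, Pi.single_apply, smul_eq_mul,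
          mul_sub, Finset.sum_sub_distrib, mul_ite, mul_zero, mul_one, Finset.sum_ite_eq,
          Finset.mem_univ, if_true]
        by_cases hk : k = o <;> simp [hk]
      rw [e]
      exact M.sum_mem fun i _ => M.smul_mem _ (hd i o)
    have heven : ∀ c : ℤ, 2 ∣ c → (Pi.single o c : Fin n → ℤ) ∈ M := by
      intro c hc
      refine aux_cong M h2 0 _ (fun k => ?_) M.zero_mem
      by_cases hk : k = o
      · subst hk
        simpa using hc
      · simp [hk]
    by_cases ht : ∀ x ∈ M, (2 : ℤ) ∣ ∑ i, x i
    · right; left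
      apply le_antisymm
      · exact fun x hx => ht x hx
      · intro x hx
        have := M.add_mem (hdec x) (heven _ hx)
        simpa using this
    · left
      push Not at ht
      obtain ⟨z, hz, hzo⟩ := ht
      have ho : (Pi.single o 1 : Fin n → ℤ) ∈ M := by
        refine aux_cong M h2 _ _ (fun k => ?_) (M.sub_mem hz (hdec z))
        by_cases hk : k = o
        · subst hk
          simp
          omega
        · simp [hk]
      rw [eq_top_iff]
      intro x _
      have := M.add_mem (hdec x) (M.smul_mem (∑ i, x i) ho)
      rw [← Pi.single_smul] at this
      simpa using this

/-- For odd `n ≥ 3`, the only full-rank integer lattices invariant under `C₂ⁿ⁺ ⋊ Sₙ`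
(even sign changes together with all coordinate permutations) are the integer multiples
of `ℤⁿ`, `Dₙ` and the same-parity lattice, and these are invariant under the full
hyperoctahedral group. -/
theorem lattices_invariant_odd_case (n : ℕ) (hn : 3 ≤ n) (hodd : Odd n)
    (Λ : Submodule ℤ (Fin n → ℤ)) (hfull : IsFullLattice Λ)
    (hinv : ∀ (v : Fin n → ℤˣ) (σ : Perm (Fin n)), (∏ i, v i) = 1 →
      ∀ x ∈ Λ, signedPerm v σ x ∈ Λ) :
    (∃ s : ℤ, Λ = scl s ⊤ ∨ Λ = scl s (Dlat n) ∨ Λ = scl s (sameParity n)) ∧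
      (∀ (v : Fin n → ℤˣ) (σ : Perm (Fin n)), ∀ x ∈ Λ, signedPerm v σ x ∈ Λ) := by
  have hall : ∀ (v : Fin n → ℤˣ) (σ : Perm (Fin n)), ∀ x ∈ Λ, signedPerm v σ x ∈ Λ := by
    intro v σ x hx
    rcases Int.units_eq_one_or (∏ i, v i) with h | h
    · exact hinv v σ h x hx
    · have h1 : (∏ i, (-v) i) = 1 := by
        simp [Finset.prod_neg, h, hodd.neg_one_pow]
      have := Λ.neg_mem (hinv (-v) σ h1 x hx)
      convert this using 1
      funext i
      simp [signedPerm]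
  refine ⟨?_, hall⟩
  let o : Fin n := ⟨0, by omega⟩
  have hp : ∀ (σ : Perm (Fin n)), ∀ x ∈ Λ, (fun i => x (σ.symm i)) ∈ Λ := by
    intro σ x hx
    have := hall 1 σ x hx
    convert this using 1
    funext i
    simp [signedPerm]
  obtain ⟨g, hg⟩ := (IsPrincipalIdealRing.principal
    (Λ.map (LinearMap.proj o : (Fin n → ℤ) →ₗ[ℤ] ℤ))).principal
  have hdiv : ∀ x ∈ Λ, ∀ i, g ∣ x i := by
    intro x hx i
    have : x i ∈ Λ.map (LinearMap.proj o : (Fin n → ℤ) →ₗ[ℤ] ℤ) :=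
      ⟨_, hp (swap i o) x hx, by simp⟩
    rw [hg, Submodule.mem_span_singleton] at this
    obtain ⟨c, hc⟩ := this
    exact ⟨c, by rw [← hc, smul_eq_mul, mul_comm]⟩
  obtain ⟨y, hy, hyg⟩ : g ∈ Λ.map (LinearMap.proj o : (Fin n → ℤ) →ₗ[ℤ] ℤ) := by
    rw [hg]
    exact Submodule.mem_span_singleton_self g
  replace hyg : y o = g := hyg
  let M : Submodule ℤ (Fin n → ℤ) :=
    Λ.comap (g • (LinearMap.id : (Fin n → ℤ) →ₗ[ℤ] (Fin n → ℤ)))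
  have hM : ∀ x, x ∈ M ↔ g • x ∈ Λ := fun x => Iff.rfl
  have hΛ : Λ = scl g M := by
    apply le_antisymm
    · intro x hx
      choose c hc using hdiv x hx
      have e : g • c = x := by
        funext i
        simp [hc i]
      exact ⟨c, (hM c).2 (e ▸ hx), e⟩
    · rintro _ ⟨c, hc, rfl⟩
      exact hc
  by_cases hg0 : g = 0
  · refine ⟨0, Or.inl ?_⟩
    rw [hΛ, hg0]
    apply le_antisymm
    · rintro _ ⟨c, hc, rfl⟩
      exact ⟨0, trivial, by simp⟩
    · rintro _ ⟨c, hc, rfl⟩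
      exact ⟨0, M.zero_mem, by simp⟩
  have h2 : ∀ i, Pi.single i (2 : ℤ) ∈ M := by
    intro i
    rw [hM]
    have hw := hp (swap o i) y hy
    have hf := hall (fun k => if k = i then -1 else 1) (Equiv.refl _) _ hw
    have := Λ.sub_mem hw hf
    convert this using 1
    funext k
    by_cases hk : k = i
    · subst hk
      simp [signedPerm, hyg]
      ring
    · simp [signedPerm, hk]
  have hpM : ∀ (σ : Perm (Fin n)), ∀ x ∈ M, (fun i => x (σ.symm i)) ∈ M := by
    intro σ x hx
    exact hp σ _ hx
  obtain ⟨c, hc⟩ : ∃ c, g • c = y := by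
    choose c hc using hdiv y hy
    exact ⟨c, by funext i; simp [hc i]⟩
  have hco : c o = 1 := by
    have h := congrFun hc o
    rw [hyg, Pi.smul_apply, smul_eq_mul] at h
    exact mul_left_cancel₀ hg0 (by rw [h, mul_one])
  refine ⟨g, ?_⟩
  rcases aux_class o M h2 hpM c ((hM c).2 (hc ▸ hy)) hco with h | h | h
  · exact Or.inl (h ▸ hΛ)
  · exact Or.inr (Or.inl (h ▸ hΛ))
  · exact Or.inr (Or.inr (h ▸ hΛ))
end

section
/- If Λ ⊆ ℤ⁴ is a rank-4 lattice invariant under the group C₂⁴ ⋊ D₄ (all sign changes combined with the dihedral group D₄ ≤ S₄ permuting coordinates as symmetries of a square on labels 1,2,3,4), then Λ is an integer multiple of one of: ℤ⁴, D₄-lattice {x ∈ ℤ⁴ : Σxᵢ even}, the lattice of integer vectors with all coordinates of the same parity, or the lattice generated by (1,0,1,0), (1,0,−1,0), (0,1,0,1), (0,1,0,−1). -/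
open Equiv

/-- The dihedral subgroup `D₄ ≤ S₄` of order 8 permuting the coordinates as the
symmetries of a square on the labels `1,2,3,4`. -/
def dihedralD4 : Subgroup (Perm (Fin 4)) :=
  Subgroup.closure {Equiv.swap (0 : Fin 4) 1 * Equiv.swap (2 : Fin 4) 3,
    Equiv.swap (1 : Fin 4) 3}

/-- The lattice `Λ_{(1,1)} × Λ_{(1,1)}` generated by `(1,0,1,0)`, `(1,0,−1,0)`,
`(0,1,0,1)` and `(0,1,0,−1)`. -/
def latProd : Submodule ℤ (Fin 4 → ℤ) :=
  Submodule.span ℤ {![1,0,1,0], ![1,0,-1,0], ![0,1,0,1], ![0,1,0,-1]}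

structure InvCode (P : ZMod 2 → ZMod 2 → ZMod 2 → ZMod 2 → Prop) : Prop where
  add : ∀ {a b c d a₂ b₂ c₂ d₂}, P a b c d → P a₂ b₂ c₂ d₂ → P (a + a₂) (b + b₂) (c + c₂) (d + d₂)
  h1 : ∀ {a b c d}, P a b c d → P b a d c
  h2 : ∀ {a b c d}, P a b c d → P a d c b

theorem zmod2_cases (a : ZMod 2) : a = 0 ∨ a = 1 := by revert a; decide


theorem InvCode.gen1000 {P : ZMod 2 → ZMod 2 → ZMod 2 → ZMod 2 → Prop}
    (H : InvCode P) (h : P 1 0 0 0) (w x y z : ZMod 2) : P w x y z := by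
  have e1 : P 0 1 0 0 := H.h1 h
  have e3 : P 0 0 0 1 := H.h2 e1
  have e2 : P 0 0 1 0 := H.h1 e3
  have e0 : P 0 0 0 0 := H.add h h
  have k : ∀ a : ZMod 2, P a 0 0 0 ∧ P 0 a 0 0 ∧ P 0 0 a 0 ∧ P 0 0 0 a := by
    intro a
    rcases zmod2_cases a with rfl | rfl
    · exact ⟨e0, e0, e0, e0⟩
    · exact ⟨h, e1, e2, e3⟩
  simpa using H.add (H.add (k w).1 (k x).2.1) (H.add (k y).2.2.1 (k z).2.2.2)

theorem InvCode.odd {P : ZMod 2 → ZMod 2 → ZMod 2 → ZMod 2 → Prop}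
    (H : InvCode P) {a b c d : ZMod 2} (h : P a b c d) (hs : a + b + c + d = 1)
    (w x y z : ZMod 2) : P w x y z := by
  have t : P 1 1 0 1 → P 1 0 0 0 := fun A => by
    have B : P 1 1 1 0 := H.h1 A
    have C : P 1 0 1 1 := H.h2 B
    exact H.add (H.add A B) C
  refine H.gen1000 ?_ w x y z
  rcases zmod2_cases a with rfl | rfl <;> rcases zmod2_cases b with rfl | rfl <;>
    rcases zmod2_cases c with rfl | rfl <;> rcases zmod2_cases d with rfl | rfl <;>
    first
    | exact absurd hs (by decide)
    | exact h
    | exact H.h1 h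
    | exact H.h1 (H.h2 h)
    | exact H.h1 (H.h2 (H.h1 h))
    | exact t h
    | exact t (H.h1 h)
    | exact t (H.h1 (H.h2 h))
    | exact t (H.h1 (H.h2 (H.h1 h)))

theorem InvCode.even {P : ZMod 2 → ZMod 2 → ZMod 2 → ZMod 2 → Prop}
    (H : InvCode P) {a b c d : ZMod 2} (h : P a b c d) (hs : a + b + c + d = 0)
    (h02 : a ≠ c) (w x y z : ZMod 2) (hw : w + x + y + z = 0) : P w x y z := by
  have e : P 1 1 0 0 := by
    rcases zmod2_cases a with rfl | rfl <;> rcases zmod2_cases b with rfl | rfl <;>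
      rcases zmod2_cases c with rfl | rfl <;> rcases zmod2_cases d with rfl | rfl <;>
    first
    | exact absurd hs (by decide)
    | exact absurd rfl h02
    | exact h
    | exact H.h2 h
    | exact H.h2 (H.h1 h)
    | exact H.h2 (H.h1 (H.h2 h))
  have e1 : P 1 0 0 1 := H.h2 e
  have e2 : P 0 1 1 0 := H.h1 e1
  have e3 : P 0 0 1 1 := H.h2 e2
  have k0 : P 0 0 0 0 := H.add e e
  have k1 : P 0 1 0 1 := H.add e e1
  have k2 : P 1 0 1 0 := H.add e e2
  have k3 : P 1 1 1 1 := H.add e e3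
  rcases zmod2_cases w with rfl | rfl <;> rcases zmod2_cases x with rfl | rfl <;>
      rcases zmod2_cases y with rfl | rfl <;> rcases zmod2_cases z with rfl | rfl <;>
    first
    | exact absurd hw (by decide)
    | assumption

theorem InvCode.prod {P : ZMod 2 → ZMod 2 → ZMod 2 → ZMod 2 → Prop}
    (H : InvCode P) {a b : ZMod 2} (h : P a b a b) (hs : a ≠ b) (w x : ZMod 2) : P w x w x := by
  have e : P 1 0 1 0 := by
    rcases zmod2_cases a with rfl | rfl <;> rcases zmod2_cases b with rfl | rfl <;>
    first
    | exact absurd rfl hs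
    | exact h
    | exact H.h1 h
  have e1 : P 0 1 0 1 := H.h1 e
  have k0 : P 0 0 0 0 := H.add e e
  have k3 : P 1 1 1 1 := H.add e e1
  rcases zmod2_cases w with rfl | rfl <;> rcases zmod2_cases x with rfl | rfl <;> assumption


theorem mem_latProd_iff (y : Fin 4 → ℤ) :
    y ∈ latProd ↔ (2 : ℤ) ∣ y 0 - y 2 ∧ (2 : ℤ) ∣ y 1 - y 3 := by
  constructor
  · intro h
    unfold latProd at h
    induction h using Submodule.span_induction with
    | mem x hx =>
      simp only [Set.mem_insert_iff, Set.mem_singleton_iff] at hx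
      rcases hx with rfl | rfl | rfl | rfl <;> simp
    | zero => simp
    | add x y _ _ hx hy => simp only [Pi.add_apply]; omega
    | smul a x _ hx =>
      simp only [Pi.smul_apply, smul_eq_mul, ← mul_sub]
      exact ⟨hx.1.mul_left a, hx.2.mul_left a⟩
  · rintro ⟨⟨a, ha⟩, ⟨b, hb⟩⟩
    have : y = (y 2 + a) • ![1,0,1,0] + a • ![1,0,-1,0] + (y 3 + b) • ![0,1,0,1]
        + b • ![0,1,0,-1] := by
      ext i
      fin_cases i <;> simp <;> omega
    rw [this]
    refine add_mem (add_mem (add_mem ?_ ?_) ?_) ?_ <;>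
      exact Submodule.smul_mem _ _ (Submodule.subset_span (by simp))

theorem classify (M : Submodule ℤ (Fin 4 → ℤ))
    (hinv : ∀ (v : Fin 4 → ℤˣ) (σ : Perm (Fin 4)), σ ∈ dihedralD4 →
      ∀ x ∈ M, signedPerm v σ x ∈ M) (x₀ : Fin 4 → ℤ) (hx₀ : x₀ ∈ M) (h1 : x₀ 0 = 1) :
    M = ⊤ ∨ M = Dlat 4 ∨ M = sameParity 4 ∨ M = latProd := by
  have hs1 : Equiv.swap (0 : Fin 4) 1 * Equiv.swap (2 : Fin 4) 3 ∈ dihedralD4 :=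
    Subgroup.subset_closure (by simp)
  have hs2 : Equiv.swap (1 : Fin 4) 3 ∈ dihedralD4 :=
    Subgroup.subset_closure (by simp)
  have p1 : ∀ x ∈ M, ![x 1, x 0, x 3, x 2] ∈ M := by
    intro x hx
    convert hinv 1 _ hs1 x hx using 1
    ext i; fin_cases i <;> simp [signedPerm] <;> congr 1
  have p2 : ∀ x ∈ M, ![x 0, x 3, x 2, x 1] ∈ M := by
    intro x hx
    convert hinv 1 _ hs2 x hx using 1
    ext i; fin_cases i <;> simp [signedPerm] <;> congr 1
  have t0 : ![2, 0, 0, 0] ∈ M := by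
    have := M.sub_mem hx₀ (hinv ![-1, 1, 1, 1] 1 (one_mem _) x₀ hx₀)
    convert this using 1
    have e : ∀ i, (Equiv.symm (1 : Perm (Fin 4))) i = i := fun _ => rfl
    ext i; fin_cases i <;> simp [signedPerm, h1, e]
  have t1 : ![0, 2, 0, 0] ∈ M := by simpa using p1 _ t0
  have t3 : ![0, 0, 0, 2] ∈ M := by simpa using p2 _ t1
  have t2 : ![0, 0, 2, 0] ∈ M := by simpa using p1 _ t3
  have red : ∀ x ∈ M, ∀ y : Fin 4 → ℤ, (∀ i, (2 : ℤ) ∣ y i - x i) → y ∈ M := by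
    intro x hx y h
    choose k hk using h
    have : y = x + (k 0 • ![2, 0, 0, 0] + k 1 • ![0, 2, 0, 0] + k 2 • ![0, 0, 2, 0]
        + k 3 • ![0, 0, 0, 2]) := by
      ext i
      have := hk i
      fin_cases i <;> simp at this ⊢ <;> omega
    rw [this]
    exact M.add_mem hx (M.add_mem (M.add_mem (M.add_mem (M.smul_mem _ t0) (M.smul_mem _ t1))
      (M.smul_mem _ t2)) (M.smul_mem _ t3))
  let P : ZMod 2 → ZMod 2 → ZMod 2 → ZMod 2 → Prop := fun a b c d =>
    ∃ x ∈ M, (x 0 : ZMod 2) = a ∧ (x 1 : ZMod 2) = b ∧ (x 2 : ZMod 2) = c ∧ (x 3 : ZMod 2) = d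
  have H : InvCode P := by
    constructor
    · rintro a b c d a₂ b₂ c₂ d₂ ⟨x, hx, rfl, rfl, rfl, rfl⟩ ⟨y, hy, rfl, rfl, rfl, rfl⟩
      exact ⟨x + y, M.add_mem hx hy, by simp⟩
    · rintro a b c d ⟨x, hx, rfl, rfl, rfl, rfl⟩
      exact ⟨_, p1 x hx, by simp⟩
    · rintro a b c d ⟨x, hx, rfl, rfl, rfl, rfl⟩
      exact ⟨_, p2 x hx, by simp⟩
  have toP : ∀ x ∈ M, P (x 0) (x 1) (x 2) (x 3) := fun x hx => ⟨x, hx, rfl, rfl, rfl, rfl⟩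
  have ofP : ∀ x : Fin 4 → ℤ, P (x 0) (x 1) (x 2) (x 3) → x ∈ M := by
    rintro x ⟨y, hy, h0, h1, h2, h3⟩
    refine red y hy x fun i => ?_
    fin_cases i
    · exact (ZMod.intCast_eq_intCast_iff_dvd_sub _ _ 2).1 h0
    · exact (ZMod.intCast_eq_intCast_iff_dvd_sub _ _ 2).1 h1
    · exact (ZMod.intCast_eq_intCast_iff_dvd_sub _ _ 2).1 h2
    · exact (ZMod.intCast_eq_intCast_iff_dvd_sub _ _ 2).1 h3
  have cast_eq : ∀ a b : ℤ, (a : ZMod 2) = b ↔ (2 : ℤ) ∣ a - b := fun a b => by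
    rw [eq_comm]; exact ZMod.intCast_eq_intCast_iff_dvd_sub _ _ 2
  have mD : ∀ x : Fin 4 → ℤ, x ∈ Dlat 4 ↔ (2 : ℤ) ∣ x 0 + x 1 + x 2 + x 3 := fun x => by
    change (2 : ℤ) ∣ ∑ i, x i ↔ _
    rw [Fin.sum_univ_four]
  have cast_sum : ∀ x : Fin 4 → ℤ, (x 0 + x 1 + x 2 + x 3 : ZMod 2) = 0 ↔ x ∈ Dlat 4 := by
    intro x
    rw [mD]
    have := (ZMod.intCast_zmod_eq_zero_iff_dvd (x 0 + x 1 + x 2 + x 3) 2)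
    push_cast at this
    exact this
  by_cases hD : M ≤ Dlat 4
  swap
  · left
    obtain ⟨x, hx, hxD⟩ := Set.not_subset.1 hD
    refine eq_top_iff.2 fun y _ => ofP y (H.odd (toP x hx) ?_ _ _ _ _)
    rcases zmod2_cases (x 0 + x 1 + x 2 + x 3 : ZMod 2) with h | h
    · exact absurd ((cast_sum x).1 h) hxD
    · exact h
  right
  by_cases h02 : ∀ x ∈ M, (2 : ℤ) ∣ x 0 - x 2
  swap
  · left
    push Not at h02
    obtain ⟨x, hx, hne⟩ := h02
    refine le_antisymm hD fun y hy => ofP y ?_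
    exact H.even (toP x hx) ((cast_sum x).2 (hD hx)) (fun h => hne ((cast_eq _ _).1 h)) _ _ _ _
      ((cast_sum y).2 hy)
  right
  have h13 : ∀ x ∈ M, (2 : ℤ) ∣ x 1 - x 3 := fun x hx => by
    have := (mD x).1 (hD hx)
    have := h02 x hx
    omega
  by_cases h01 : ∀ x ∈ M, (2 : ℤ) ∣ x 0 - x 1
  · left
    refine le_antisymm (fun x hx i j => ?_) fun y hy => red ((y 0) • x₀) (M.smul_mem _ hx₀) y ?_
    · have := h01 x hx
      have := h02 x hx
      have := h13 x hx
      fin_cases i <;> fin_cases j <;> simp <;> omega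
    · have a := h01 x₀ hx₀
      have b := h02 x₀ hx₀
      have c := h13 x₀ hx₀
      intro i
      have hi : (2 : ℤ) ∣ x₀ 0 - x₀ i := by fin_cases i <;> simp <;> omega
      rw [h1] at hi
      have e : y i - (y 0 • x₀) i = (y i - y 0) + y 0 * (1 - x₀ i) := by
        simp only [Pi.smul_apply, smul_eq_mul]; ring
      rw [e]
      exact dvd_add (hy i 0) (hi.mul_left _)
  · right
    push Not at h01
    obtain ⟨x, hx, hne⟩ := h01
    ext y
    rw [mem_latProd_iff]
    refine ⟨fun hy => ⟨h02 y hy, h13 y hy⟩, fun ⟨ha, hb⟩ => ofP y ?_⟩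
    have k := toP x hx
    rw [← (cast_eq _ _).2 (h02 x hx), ← (cast_eq _ _).2 (h13 x hx)] at k
    rw [← (cast_eq _ _).2 ha, ← (cast_eq _ _).2 hb]
    exact H.prod k (fun h => hne ((cast_eq _ _).1 h)) _ _

/-- A full-rank lattice `Λ ⊆ ℤ⁴` invariant under `C₂⁴ ⋊ D₄` is an integer multiple of
`ℤ⁴`, `D₄`-lattice, the same-parity lattice, or `Λ_{(1,1)} × Λ_{(1,1)}`. -/
theorem lattices_invariant_under_C2D4
    (Λ : Submodule ℤ (Fin 4 → ℤ)) (hfull : IsFullLattice Λ)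
    (hinv : ∀ (v : Fin 4 → ℤˣ) (σ : Perm (Fin 4)), σ ∈ dihedralD4 →
      ∀ x ∈ Λ, signedPerm v σ x ∈ Λ) :
    ∃ s : ℤ, Λ = scl s ⊤ ∨ Λ = scl s (Dlat 4) ∨ Λ = scl s (sameParity 4) ∨
      Λ = scl s latProd := by
  have hs1 : Equiv.swap (0 : Fin 4) 1 * Equiv.swap (2 : Fin 4) 3 ∈ dihedralD4 :=
    Subgroup.subset_closure (by simp)
  have hs2 : Equiv.swap (1 : Fin 4) 3 ∈ dihedralD4 :=
    Subgroup.subset_closure (by simp)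
  let I : Submodule ℤ ℤ := Λ.map (LinearMap.proj 0)
  obtain ⟨d, hd⟩ := (IsPrincipalIdealRing.principal (I : Ideal ℤ)).principal
  have d0 : ∀ x ∈ Λ, d ∣ x 0 := fun x hx => by
    have : x 0 ∈ I := ⟨x, hx, rfl⟩
    rw [hd] at this
    exact Ideal.mem_span_singleton.1 this
  have d1 : ∀ x ∈ Λ, d ∣ x 1 := fun x hx => by
    have := d0 _ (hinv 1 _ hs1 x hx)
    have e : (Equiv.symm (Equiv.swap (0 : Fin 4) 1 * Equiv.swap (2 : Fin 4) 3)) 0 = 1 := by decide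
    simpa [signedPerm, e] using this
  have d3 : ∀ x ∈ Λ, d ∣ x 3 := fun x hx => by
    have := d1 _ (hinv 1 _ hs2 x hx)
    simpa [signedPerm] using this
  have d2 : ∀ x ∈ Λ, d ∣ x 2 := fun x hx => by
    have := d3 _ (hinv 1 _ hs1 x hx)
    have e : (Equiv.symm (Equiv.swap (0 : Fin 4) 1 * Equiv.swap (2 : Fin 4) 3)) 3 = 2 := by decide
    simpa [signedPerm, e] using this
  have hdI : d ∈ I := by
    rw [hd]; exact Ideal.mem_span_singleton_self d
  obtain ⟨x, hx, hxd⟩ := hdI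
  have dall : ∀ x ∈ Λ, ∀ i, d ∣ x i := fun x hx i => by
    fin_cases i
    exacts [d0 x hx, d1 x hx, d2 x hx, d3 x hx]
  let M : Submodule ℤ (Fin 4 → ℤ) :=
    Λ.comap (d • (LinearMap.id : (Fin 4 → ℤ) →ₗ[ℤ] (Fin 4 → ℤ)))
  have hM : Λ = scl d M := by
    ext y
    constructor
    · intro hy
      choose k hk using dall y hy
      have : d • k = y := by ext i; simp [hk i]
      exact ⟨k, by change d • k ∈ Λ; rwa [this], this⟩
    · rintro ⟨k, hk, rfl⟩
      exact hk
  have hMinv : ∀ (v : Fin 4 → ℤˣ) (σ : Perm (Fin 4)), σ ∈ dihedralD4 →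
      ∀ x ∈ M, signedPerm v σ x ∈ M := by
    intro v σ hσ x hx
    have := hinv v σ hσ _ hx
    change d • signedPerm v σ x ∈ Λ
    convert this using 1
    ext i
    simp only [signedPerm, Pi.smul_apply, LinearMap.smul_apply, LinearMap.id_apply, smul_eq_mul]
    ring
  have hone : ∃ z ∈ M, z 0 = 1 := by
    choose k hk using dall x hx
    have hxe : x 0 = d := hxd
    refine ⟨fun i => if i = 0 then 1 else k i, ?_, by simp⟩
    have e : (d • fun i => if i = 0 then 1 else k i) = x := ?_
    · change (d • fun i => if i = 0 then 1 else k i) ∈ Λ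
      rw [e]; exact hx
    ext i
    by_cases hi : i = 0
    · subst hi; simp [hxe]
    · simp [hi, hk i]
  obtain ⟨z, hz, hz1⟩ := hone
  refine ⟨d, ?_⟩
  rcases classify M hMinv z hz hz1 with h | h | h | h
  · left; rw [← h]; exact hM
  · right; left; rw [← h]; exact hM
  · right; right; left; rw [← h]; exact hM
  · right; right; right; rw [← h]; exact hM
end

section
/- Let n ≥ 4 and suppose Λ is a rank-n lattice invariant under C₂ⁿ ⋊ Sₙ₋₁ (all sign changes together with permutations fixing the last coordinate) such that Λ ∩ {xₙ = 0} equals s·{x ∈ ℤⁿ⁻¹ : all coordinates of equal parity} (embedded in the hyperplane xₙ = 0). Then Λ is a vertical translation lattice with respect to the hyperplane xₙ = 0, i.e. Λ = ⋃_{k∈ℤ} (Λ∩{xₙ=0}) + k·d·eₙ for some d > 0. -/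
open Equiv

/-- The copy, inside the coordinate hyperplane `x_{i₀} = 0`, of the lattice of integer
vectors all of whose coordinates have the same parity. -/
def sameParityHyp (n : ℕ) (i₀ : Fin n) : Submodule ℤ (Fin n → ℤ) where
  carrier := {x | x i₀ = 0 ∧ ∀ i j, i ≠ i₀ → j ≠ i₀ → (2 : ℤ) ∣ (x i - x j)}
  add_mem' := by
    rintro a b ⟨ha0, ha⟩ ⟨hb0, hb⟩
    refine ⟨by simp [ha0, hb0], fun i j hi hj => ?_⟩
    have := dvd_add (ha i j hi hj) (hb i j hi hj)
    simpa [Pi.add_apply, add_sub_add_comm] using this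
  zero_mem' := by simp
  smul_mem' := by
    rintro c x ⟨hx0, hx⟩
    refine ⟨by simp [hx0], fun i j hi hj => ?_⟩
    have := (hx i j hi hj).mul_left c
    simpa [Pi.smul_apply, smul_eq_mul, mul_sub] using this

theorem parity_aux {n : ℕ} (L : Fin n) (hL : ∀ i j : Fin n, ∃ k, k ≠ L ∧ k ≠ i ∧ k ≠ j)
    (s : ℤ) (hs : 0 < s)
    (Λ : Submodule ℤ (Fin n → ℤ)) (hfull : IsFullLattice Λ)
    (hinv : ∀ (v : Fin n → ℤˣ) (σ : Perm (Fin n)), σ L = L →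
      ∀ x ∈ Λ, signedPerm v σ x ∈ Λ)
    (hslice : Λ ⊓ LinearMap.ker (LinearMap.proj (R := ℤ) (φ := fun _ : Fin n => ℤ) L) =
      scl s (sameParityHyp n L)) :
    ∃ d : ℤ, 0 < d ∧ ∀ x, x ∈ Λ ↔ ∃ k : ℤ,
      x - (k * d) • Pi.single L (1 : ℤ) ∈
        Λ ⊓ LinearMap.ker (LinearMap.proj (R := ℤ) (φ := fun _ : Fin n => ℤ) L) := by
  have hmem : ∀ z : Fin n → ℤ, (z ∈ Λ ∧ z L = 0) ↔
      ∃ y : Fin n → ℤ, (y L = 0 ∧ ∀ i j, i ≠ L → j ≠ L → (2 : ℤ) ∣ (y i - y j)) ∧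
        ∀ i, z i = s * y i := by
    intro z
    have h1 : (z ∈ Λ ∧ z L = 0) ↔ z ∈ Λ ⊓ LinearMap.ker
        (LinearMap.proj (R := ℤ) (φ := fun _ : Fin n => ℤ) L) := by
      simp [Submodule.mem_inf]
    rw [h1, hslice]
    constructor
    · rintro ⟨y, hy, rfl⟩
      exact ⟨y, hy, fun i => by simp⟩
    · rintro ⟨y, hy, hz⟩
      refine ⟨y, hy, ?_⟩
      ext i
      simp [hz i]
  have hs0 : s ≠ 0 := hs.ne'
  -- coordinates are divisible by s
  have hdiv : ∀ x ∈ Λ, ∀ i, i ≠ L → s ∣ x i := by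
    intro x hx i hi
    have h1 := hinv (fun j => if j = i then -1 else 1) (Equiv.refl _) rfl x hx
    have h2 := Λ.sub_mem hx h1
    obtain ⟨y, ⟨-, hy⟩, hz⟩ := (hmem _).1 ⟨h2, by simp [signedPerm, hi.symm]⟩
    obtain ⟨k, hkL, hki, -⟩ := hL i i
    have hk := hz k
    have hii := hz i
    simp [signedPerm, hki, hs0] at hk hii
    have := hy i k hi hkL
    rw [hk, sub_zero] at this
    obtain ⟨m, hm⟩ := this
    refine ⟨m, ?_⟩
    rw [hm] at hii
    linarith
  have hpar : ∀ x ∈ Λ, ∀ i j, i ≠ L → j ≠ L → 2 * s ∣ x i - x j := by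
    intro x hx i j hi hj
    by_cases hij : i = j
    · simp [hij]
    have h1 := hinv 1 (Equiv.swap i j) (Equiv.swap_apply_of_ne_of_ne hi.symm hj.symm) x hx
    have h2 := Λ.sub_mem hx h1
    obtain ⟨y, ⟨-, hy⟩, hz⟩ := (hmem _).1 ⟨h2, by
      simp [signedPerm, Equiv.swap_apply_of_ne_of_ne hi.symm hj.symm]⟩
    obtain ⟨k, hkL, hki, hkj⟩ := hL i j
    have hk := hz k
    have hii := hz i
    simp [signedPerm, Equiv.swap_apply_of_ne_of_ne hki hkj, hs0] at hk hii
    have := hy i k hi hkL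
    rw [hk, sub_zero] at this
    obtain ⟨m, hm⟩ := this
    refine ⟨m, ?_⟩
    rw [hii, hm]
    ring
  have hvert : ∀ x ∈ Λ, (x - (x L) • Pi.single L (1 : ℤ)) ∈ Λ ∧
      (x - (x L) • Pi.single L (1 : ℤ) : Fin n → ℤ) L = 0 := by
    intro x hx
    rw [hmem]
    refine ⟨fun i => if i = L then 0 else x i / s, ⟨by simp, ?_⟩, ?_⟩
    · intro i j hi hj
      simp only [hi, hj, if_false]
      obtain ⟨a, ha⟩ := hdiv x hx i hi
      obtain ⟨b, hb⟩ := hdiv x hx j hj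
      have h := hpar x hx i j hi hj
      rw [ha, hb] at h ⊢
      rw [Int.mul_ediv_cancel_left _ hs0, Int.mul_ediv_cancel_left _ hs0]
      rw [← mul_sub, mul_comm 2 s] at h
      exact (mul_dvd_mul_iff_left hs0).1 h
    · intro i
      by_cases hi : i = L
      · subst hi; simp
      · simp [hi, Int.mul_ediv_cancel' (hdiv x hx i hi)]
  have hvert' : ∀ x ∈ Λ, (x L) • (Pi.single L (1 : ℤ) : Fin n → ℤ) ∈ Λ := by
    intro x hx
    have := Λ.sub_mem hx (hvert x hx).1
    simpa using this
  let T : Submodule ℤ ℤ := Λ.comap (LinearMap.toSpanSingleton ℤ (Fin n → ℤ) (Pi.single L (1 : ℤ)))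
  have hT : ∀ t, t ∈ T ↔ t • (Pi.single L (1 : ℤ) : Fin n → ℤ) ∈ Λ := by
    intro t
    simp only [T, Submodule.mem_comap, LinearMap.toSpanSingleton_apply]
  obtain ⟨d, hd⟩ : ∃ d, T = Submodule.span ℤ {d} := (IsPrincipalIdealRing.principal T).1
  have hd0 : d ≠ 0 := by
    rintro rfl
    obtain ⟨b, hb, hΛ⟩ := hfull
    have hz : ∀ i, b i L = 0 := by
      intro i
      have hbi : b i ∈ Λ := hΛ ▸ Submodule.subset_span ⟨i, rfl⟩
      have := (hT _).2 (hvert' _ hbi)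
      rw [hd] at this
      simpa using this
    have hdet : (Matrix.of b).det = 0 := Matrix.det_eq_zero_of_column_eq_zero L hz
    obtain ⟨v, hv, hv0⟩ := Matrix.exists_vecMul_eq_zero_iff.2 hdet
    apply hv
    ext i
    refine Fintype.linearIndependent_iff.1 hb v ?_ i
    rw [Matrix.vecMul_eq_sum] at hv0
    exact hv0
  have hdT : ∀ t, t ∈ T ↔ ∃ k, t = k * |d| := by
    intro t
    rw [hd, Submodule.mem_span_singleton]
    rcases abs_choice d with h | h <;> rw [h]
    · exact ⟨fun ⟨a, ha⟩ => ⟨a, by simpa using ha.symm⟩, fun ⟨a, ha⟩ => ⟨a, by simpa using ha.symm⟩⟩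
    · exact ⟨fun ⟨a, ha⟩ => ⟨-a, by simpa using ha.symm⟩,
        fun ⟨a, ha⟩ => ⟨-a, by simpa using ha.symm⟩⟩
  refine ⟨|d|, abs_pos.2 hd0, fun x => ⟨fun hx => ?_, ?_⟩⟩
  · obtain ⟨k, hk⟩ := (hdT _).1 ((hT _).2 (hvert' x hx))
    refine ⟨k, ?_⟩
    rw [← hk]
    exact ⟨(hvert x hx).1, by simp⟩
  · rintro ⟨k, hk⟩
    have h1 := (hT _).1 ((hdT _).2 ⟨k, rfl⟩)
    have := Λ.add_mem hk.1 h1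
    simpa using this

/-- Let `n ≥ 4` and let `Λ` be a full-rank lattice invariant under `C₂ⁿ ⋊ Sₙ₋₁` (all
sign changes and the permutations fixing the last coordinate) whose intersection with
the hyperplane `xₙ = 0` is `s` times the same-parity lattice of that hyperplane.  Then
`Λ` is a vertical translation lattice with respect to the hyperplane `xₙ = 0`. -/
theorem lattice_with_same_parity_slice_is_vertical (n : ℕ) (hn : 4 ≤ n)
    (s : ℤ) (hs : 0 < s)
    (Λ : Submodule ℤ (Fin n → ℤ)) (hfull : IsFullLattice Λ)
    (hinv : ∀ (v : Fin n → ℤˣ) (σ : Perm (Fin n)),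
      σ (⟨n - 1, by omega⟩ : Fin n) = (⟨n - 1, by omega⟩ : Fin n) →
      ∀ x ∈ Λ, signedPerm v σ x ∈ Λ)
    (hslice : Λ ⊓ LinearMap.ker (LinearMap.proj (R := ℤ) (φ := fun _ : Fin n => ℤ)
        (⟨n - 1, by omega⟩ : Fin n)) =
      scl s (sameParityHyp n (⟨n - 1, by omega⟩ : Fin n))) :
    ∃ d : ℤ, 0 < d ∧ ∀ x, x ∈ Λ ↔ ∃ k : ℤ,
      x - (k * d) • Pi.single (⟨n - 1, by omega⟩ : Fin n) (1 : ℤ) ∈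
        Λ ⊓ LinearMap.ker (LinearMap.proj (R := ℤ) (φ := fun _ : Fin n => ℤ)
          (⟨n - 1, by omega⟩ : Fin n)) := by
  refine parity_aux _ ?_ s hs Λ hfull hinv hslice
  intro i j
  have hc : ({⟨n - 1, by omega⟩, i, j} : Finset (Fin n)).card < Fintype.card (Fin n) := by
    have := Finset.card_le_three (a := (⟨n - 1, by omega⟩ : Fin n)) (b := i) (c := j)
    rw [Fintype.card_fin]
    omega
  obtain ⟨k, hk⟩ := Finset.exists_mem_notMem_of_card_lt_card
    (s := ({⟨n - 1, by omega⟩, i, j} : Finset (Fin n))) (t := Finset.univ) hc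
  refine ⟨k, ?_⟩
  simpa using hk.2
end
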